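/- Let d ≥ 1, H ∈ (0,1/2), let f : ℝ^d → ℝ be continuous with compact support, and define p(t,x,y) = (2π t^{2H})^{−d/2} exp(−‖x−y‖²/(2 t^{2H})) and u(t,x) = ∫_{ℝ^d} p(t,x,y) f(y) dy for t > 0, with u(0,x) = f(x). Then: (i) for every t > 0 and x ∈ ℝ^d, the conformable fractional derivative of order 2H in t satisfies T_{2H} u(t,x) = H Δ_x u(t,x); and (ii) u(t,x) → f(x) as t → 0⁺ for every x ∈ ℝ^d. In probabilistic terms, u(t,x) = E[f(x + B^H(t))] where B^H is fractional Brownian motion of Hurst index H started at 0, and it solves the conformable fractional Cauchy problem T_{2H} u = H Δ_x u, u(0,x) = f(x). -/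

import Mathlib

noncomputable section
open Real Filter Topology

/-- The conformable fractional derivative of order `α` of `f` at `t`:
`f` is `α`-differentiable at `t` with conformable derivative `L` if
`(f (t + ε * t^(1-α)) - f t) / ε → L` as `ε → 0`. -/
def HasConformableDerivAt (α : ℝ) (f : ℝ → ℝ) (L t : ℝ) : Prop :=
  Tendsto (fun ε : ℝ => (f (t + ε * t ^ (1 - α)) - f t) / ε) (𝓝[≠] (0 : ℝ)) (𝓝 L)

/-- The Laplacian of `f : ℝ^d → ℝ` at `x`: the sum over the coordinate
directions of the second partial derivatives. -/
def laplacian {d : ℕ} (f : EuclideanSpace ℝ (Fin d) → ℝ)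
    (x : EuclideanSpace ℝ (Fin d)) : ℝ :=
  ∑ j : Fin d,
    fderiv ℝ (fun y => fderiv ℝ f y (EuclideanSpace.single j 1)) x
      (EuclideanSpace.single j 1)

/-- The transition density of fractional Brownian motion of Hurst index `H`:
the Gaussian density with mean `x` and covariance `t^(2H)` times the identity. -/
def fbmKernel (d : ℕ) (H : ℝ) (t : ℝ) (x y : EuclideanSpace ℝ (Fin d)) : ℝ :=
  (2 * Real.pi * t ^ (2 * H)) ^ (-(d : ℝ) / 2) *
    Real.exp (-‖x - y‖ ^ 2 / (2 * t ^ (2 * H)))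

open MeasureTheory in
/-- Differentiation under the integral sign against a compactly supported function. -/
lemma hasFDerivAt_integral_aux {E Y : Type*} [NormedAddCommGroup E] [NormedSpace ℝ E]
    [ProperSpace E] [NormedAddCommGroup Y] [NormedSpace ℝ Y] [FiniteDimensional ℝ Y]
    [MeasurableSpace Y] [BorelSpace Y] (μ : Measure Y) [IsFiniteMeasureOnCompacts μ]
    (f : Y → ℝ) (hf : Continuous f) (hfs : HasCompactSupport f)
    (U : Set E) (hU : IsOpen U) (K : E → Y → ℝ) (K' : E → Y → E →L[ℝ] ℝ)
    (hK : ContinuousOn (fun p : E × Y => K p.1 p.2) (U ×ˢ Set.univ))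
    (hK' : ContinuousOn (fun p : E × Y => K' p.1 p.2) (U ×ˢ Set.univ))
    (hd : ∀ x ∈ U, ∀ y, HasFDerivAt (fun z => K z y) (K' x y) x) (x₀ : E) (hx : x₀ ∈ U) :
    HasFDerivAt (fun x => ∫ y, K x y * f y ∂μ) (∫ y, f y • K' x₀ y ∂μ) x₀ := by
  obtain ⟨ε, hε, hb⟩ := Metric.nhds_basis_closedBall.mem_iff.1 (hU.mem_nhds hx)
  obtain ⟨C, hC⟩ := ((isCompact_closedBall x₀ ε).prod hfs).exists_bound_of_continuousOn
    (hK'.mono (Set.prod_mono hb (Set.subset_univ _)))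
  have hKc : ∀ x ∈ U, Continuous (K x) := by
    intro x hx
    refine continuousOn_univ.1 (hK.comp (f := fun y : Y => (x, y)) (by fun_prop) ?_)
    intro y _
    exact ⟨hx, trivial⟩
  have hK'c : Continuous (K' x₀) := by
    refine continuousOn_univ.1 (hK'.comp (f := fun y : Y => (x₀, y)) (by fun_prop) ?_)
    intro y _
    exact ⟨hx, trivial⟩
  refine hasFDerivAt_integral_of_dominated_of_fderiv_le (F' := fun x y => f y • K' x y)
    (bound := fun y => C * ‖f y‖) (Metric.closedBall_mem_nhds x₀ hε) ?_ ?_ ?_ ?_ ?_ ?_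
  · filter_upwards [hU.mem_nhds hx] with x hx
    exact ((hKc x hx).mul hf).aestronglyMeasurable
  · exact ((hKc x₀ hx).mul hf).integrable_of_hasCompactSupport hfs.mul_left
  · exact (hf.smul hK'c).aestronglyMeasurable
  · refine Eventually.of_forall fun y x hxb => ?_
    rw [norm_smul, mul_comm]
    by_cases hy : y ∈ tsupport f
    · exact mul_le_mul_of_nonneg_right (hC (x, y) ⟨hxb, hy⟩) (norm_nonneg _)
    · simp [image_eq_zero_of_notMem_tsupport hy]
  · exact ((hf.integrable_of_hasCompactSupport hfs).norm).const_mul C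
  · exact Eventually.of_forall fun y x hxb => (hd x (hb hxb) y).mul_const (f y)

/-- heat kernel with variance `c` -/
def gK (d : ℕ) (c : ℝ) (x y : EuclideanSpace ℝ (Fin d)) : ℝ :=
  (2 * Real.pi * c) ^ (-(d : ℝ) / 2) * Real.exp (-‖x - y‖ ^ 2 / (2 * c))

lemma gK_hasFDerivAt (d : ℕ) (c : ℝ) (x y : EuclideanSpace ℝ (Fin d)) :
    HasFDerivAt (fun z => gK d c z y) ((gK d c x y * (-(1 / c))) • innerSL ℝ (x - y)) x := by
  have h1 : HasFDerivAt (fun z => ‖z - y‖ ^ 2) _ x := ((hasFDerivAt_id x).sub_const y).norm_sq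
  have h2 := (((h1.neg.mul_const ((2 * c)⁻¹)).exp).const_mul ((2 * Real.pi * c) ^ (-(d : ℝ) / 2)))
  simp only [← div_eq_mul_inv] at h2
  refine h2.congr_fderiv ?_
  ext v
  simp [gK]
  ring

lemma gK_hasDerivAt (d : ℕ) (c : ℝ) (hc : 0 < c) (x y : EuclideanSpace ℝ (Fin d)) :
    HasDerivAt (fun c => gK d c x y)
      ((gK d c x y * (‖x - y‖ ^ 2 / c ^ 2 - d / c)) / 2) c := by
  have hp := Real.pi_pos
  have h1 : HasDerivAt (fun c : ℝ => 2 * Real.pi * c) (2 * Real.pi) c := by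
    simpa using (hasDerivAt_id c).const_mul (2 * Real.pi)
  have h2 := h1.rpow_const (p := -(d : ℝ) / 2) (Or.inl (by positivity))
  have h3 : HasDerivAt (fun c : ℝ => 2 * c) 2 c := by
    simpa using (hasDerivAt_id c).const_mul (2 : ℝ)
  have h4 := ((hasDerivAt_const c (-‖x - y‖ ^ 2)).div h3 (by positivity)).exp
  refine (h2.mul h4).congr_deriv ?_
  rw [Real.rpow_sub_one (by positivity)]
  simp only [gK, Pi.div_apply]
  field_simp
  ring

lemma gK_continuousOn (d : ℕ) : ContinuousOn
    (fun p : ℝ × EuclideanSpace ℝ (Fin d) × EuclideanSpace ℝ (Fin d) => gK d p.1 p.2.1 p.2.2)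
    (Set.Ioi 0 ×ˢ Set.univ) := by
  have hp := Real.pi_pos
  unfold gK
  refine ContinuousOn.mul (ContinuousOn.rpow_const (by fun_prop) ?_) ?_
  · rintro ⟨c, p⟩ ⟨hc, -⟩
    have : 0 < c := hc
    left; positivity
  · refine (ContinuousOn.div (by fun_prop) (by fun_prop) ?_).rexp
    rintro ⟨c, p⟩ ⟨hc, -⟩
    have : 0 < c := hc
    simp only; positivity

lemma gK_cont (d : ℕ) (c : ℝ) (hc : 0 < c) : Continuous
    (fun p : EuclideanSpace ℝ (Fin d) × EuclideanSpace ℝ (Fin d) => gK d c p.1 p.2) := by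
  unfold gK
  refine continuous_const.mul (Continuous.div_const (by fun_prop) _).rexp

open MeasureTheory in
lemma gK_time (d : ℕ) (f : EuclideanSpace ℝ (Fin d) → ℝ)
    (hf : Continuous f) (hfs : HasCompactSupport f) (c : ℝ) (hc : 0 < c)
    (x : EuclideanSpace ℝ (Fin d)) :
    HasDerivAt (fun c => ∫ y, gK d c x y * f y)
      ((∫ y, gK d c x y * (‖x - y‖ ^ 2 / c ^ 2 - d / c) * f y) / 2) c := by
  have hG : ContinuousOn (fun p : ℝ × EuclideanSpace ℝ (Fin d) => gK d p.1 x p.2)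
      (Set.Ioi 0 ×ˢ Set.univ) :=
    (gK_continuousOn d).comp
      (f := fun p : ℝ × EuclideanSpace ℝ (Fin d) => (p.1, x, p.2)) (by fun_prop)
      (fun p hp => ⟨hp.1, trivial⟩)
  have hD : ContinuousOn (fun p : ℝ × EuclideanSpace ℝ (Fin d) =>
      (gK d p.1 x p.2 * (‖x - p.2‖ ^ 2 / p.1 ^ 2 - d / p.1)) / 2) (Set.Ioi 0 ×ˢ Set.univ) := by
    refine (hG.mul (ContinuousOn.sub (ContinuousOn.div (by fun_prop) (by fun_prop) ?_)
      (ContinuousOn.div (by fun_prop) (by fun_prop) ?_))).div_const 2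
    · rintro ⟨c, p⟩ ⟨hc, -⟩
      have : 0 < c := hc
      simp only; positivity
    · rintro ⟨c, p⟩ ⟨hc, -⟩
      exact ne_of_gt hc
  have h := hasFDerivAt_integral_aux volume f hf hfs (Set.Ioi (0:ℝ)) isOpen_Ioi
    (fun c y => gK d c x y)
    (fun c y => ContinuousLinearMap.toSpanSingleton ℝ
      ((gK d c x y * (‖x - y‖ ^ 2 / c ^ 2 - d / c)) / 2)) hG
    ((ContinuousLinearMap.toSpanSingletonCLE (𝕜 := ℝ) (E := ℝ)).continuous.comp_continuousOn hD)
    (fun c hc y => (gK_hasDerivAt d c hc x y).hasFDerivAt) c hc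
  refine h.hasDerivAt.congr_deriv ?_
  rw [ContinuousLinearMap.integral_apply]
  · rw [← integral_div]
    congr 1
    ext y
    simp
    ring
  · have hD' : Continuous (fun y : EuclideanSpace ℝ (Fin d) =>
        (gK d c x y * (‖x - y‖ ^ 2 / c ^ 2 - d / c)) / 2) :=
      continuousOn_univ.1 (hD.comp (f := fun y : EuclideanSpace ℝ (Fin d) => (c, y))
        (by fun_prop) (fun y _ => ⟨hc, trivial⟩))
    exact (hf.smul ((ContinuousLinearMap.toSpanSingletonCLE
      (𝕜 := ℝ) (E := ℝ)).continuous.comp hD')).integrable_of_hasCompactSupport hfs.smul_right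

open MeasureTheory in
lemma gK_space1 (d : ℕ) (f : EuclideanSpace ℝ (Fin d) → ℝ)
    (hf : Continuous f) (hfs : HasCompactSupport f) (c : ℝ) (hc : 0 < c)
    (x : EuclideanSpace ℝ (Fin d)) (j : Fin d) :
    fderiv ℝ (fun z => ∫ y, gK d c z y * f y) x (EuclideanSpace.single j 1) =
      ∫ y, (gK d c x y * (-(1 / c) * (x j - y j))) * f y := by
  have hG := gK_cont d c hc
  have hD : Continuous (fun p : EuclideanSpace ℝ (Fin d) × EuclideanSpace ℝ (Fin d) =>
      (gK d c p.1 p.2 * (-(1 / c))) • innerSL ℝ (p.1 - p.2)) := by fun_prop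
  have h := hasFDerivAt_integral_aux volume f hf hfs Set.univ isOpen_univ
    (fun x y => gK d c x y)
    (fun x y => (gK d c x y * (-(1 / c))) • innerSL ℝ (x - y)) hG.continuousOn hD.continuousOn
    (fun x _ y => gK_hasFDerivAt d c x y) x trivial
  rw [h.fderiv, ContinuousLinearMap.integral_apply]
  · congr 1
    ext y
    simp [EuclideanSpace.inner_single_right]
    ring
  · have hD' : Continuous (fun y => (gK d c x y * (-(1 / c))) • innerSL ℝ (x - y)) :=
      hD.comp (f := fun y => (x, y)) (by fun_prop)
    exact (hf.smul hD').integrable_of_hasCompactSupport hfs.smul_right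

open MeasureTheory in
lemma gK_space2 (d : ℕ) (f : EuclideanSpace ℝ (Fin d) → ℝ)
    (hf : Continuous f) (hfs : HasCompactSupport f) (c : ℝ) (hc : 0 < c)
    (x : EuclideanSpace ℝ (Fin d)) (j : Fin d) :
    fderiv ℝ (fun z => ∫ y, (gK d c z y * (-(1 / c) * (z j - y j))) * f y) x
      (EuclideanSpace.single j 1) =
      ∫ y, (gK d c x y * ((x j - y j) ^ 2 / c ^ 2 - 1 / c)) * f y := by
  have hG := gK_cont d c hc
  let K' : EuclideanSpace ℝ (Fin d) → EuclideanSpace ℝ (Fin d) →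
      EuclideanSpace ℝ (Fin d) →L[ℝ] ℝ := fun x y =>
    gK d c x y • ((-(1 / c)) • (EuclideanSpace.proj j : EuclideanSpace ℝ (Fin d) →L[ℝ] ℝ)) +
      (-(1 / c) * (x j - y j)) • ((gK d c x y * (-(1 / c))) • innerSL ℝ (x - y))
  have hD : Continuous (fun p : EuclideanSpace ℝ (Fin d) × EuclideanSpace ℝ (Fin d) =>
      K' p.1 p.2) := by
    simp only [K']
    fun_prop
  have h := hasFDerivAt_integral_aux volume f hf hfs Set.univ isOpen_univ
    (fun z y => gK d c z y * (-(1 / c) * (z j - y j))) K'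
    (Continuous.continuousOn (by fun_prop)) hD.continuousOn
    (fun x _ y => by
      have h1 : HasFDerivAt (fun z : EuclideanSpace ℝ (Fin d) => -(1 / c) * (z j - y j))
          ((-(1 / c)) • (EuclideanSpace.proj j : EuclideanSpace ℝ (Fin d) →L[ℝ] ℝ)) x :=
        (((EuclideanSpace.proj j : EuclideanSpace ℝ (Fin d) →L[ℝ] ℝ).hasFDerivAt).sub_const
          (y j)).const_mul _
      exact (gK_hasFDerivAt d c x y).mul h1) x trivial
  rw [h.fderiv, ContinuousLinearMap.integral_apply]
  · congr 1
    ext y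
    simp [K', EuclideanSpace.inner_single_right]
    field_simp
    ring
  · have hD' : Continuous (fun y => K' x y) :=
      hD.comp (f := fun y => (x, y)) (by fun_prop)
    exact (hf.smul hD').integrable_of_hasCompactSupport hfs.smul_right

open MeasureTheory in
lemma gK_laplacian (d : ℕ) (f : EuclideanSpace ℝ (Fin d) → ℝ)
    (hf : Continuous f) (hfs : HasCompactSupport f) (c : ℝ) (hc : 0 < c)
    (x : EuclideanSpace ℝ (Fin d)) :
    laplacian (fun z => ∫ y, gK d c z y * f y) x =
      ∫ y, gK d c x y * (‖x - y‖ ^ 2 / c ^ 2 - d / c) * f y := by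
  have hG : Continuous (fun y => gK d c x y) :=
    (gK_cont d c hc).comp (f := fun y => (x, y)) (by fun_prop)
  unfold laplacian
  simp_rw [gK_space1 d f hf hfs c hc, gK_space2 d f hf hfs c hc]
  rw [← integral_finset_sum]
  · congr 1
    ext y
    rw [← Finset.sum_mul, ← Finset.mul_sum, Finset.sum_sub_distrib, ← Finset.sum_div,
      EuclideanSpace.real_norm_sq_eq]
    simp [div_eq_mul_inv]
  · intro j _
    exact Continuous.integrable_of_hasCompactSupport (by fun_prop) hfs.mul_left

open MeasureTheory in
lemma gK_scale (d : ℕ) (f : EuclideanSpace ℝ (Fin d) → ℝ) (r : ℝ) (hr : 0 < r)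
    (x : EuclideanSpace ℝ (Fin d)) :
    ∫ y, gK d (r ^ 2) x y * f y = ∫ z, gK d 1 0 z * f (x + r • z) := by
  have hp := Real.pi_pos
  rw [← integral_add_left_eq_self (fun y => gK d (r ^ 2) x y * f y) x]
  have h := Measure.integral_comp_smul_of_nonneg (volume : Measure (EuclideanSpace ℝ (Fin d)))
    (fun y => gK d (r ^ 2) x (x + y) * f (x + y)) r (hR := hr.le)
  have h2 : ∫ y, gK d (r ^ 2) x (x + y) * f (x + y) =
      r ^ d * ∫ z, gK d (r ^ 2) x (x + r • z) * f (x + r • z) := by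
    rw [h]
    simp
    field_simp
  rw [h2, ← integral_const_mul]
  congr 1
  ext z
  rw [← mul_assoc]
  congr 1
  have e : (r ^ 2) ^ (-(d : ℝ) / 2) = (r ^ d)⁻¹ := by
    rw [← Real.rpow_natCast r 2, ← Real.rpow_mul hr.le, ← Real.rpow_natCast r d,
      ← Real.rpow_neg hr.le]
    congr 1
    push_cast
    ring
  simp only [gK]
  rw [Real.mul_rpow (by positivity) (by positivity), e]
  simp [norm_smul, mul_pow]
  field_simp

open MeasureTheory in
lemma gK_integral (d : ℕ) : ∫ z, gK d 1 0 z = 1 := by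
  have hp := Real.pi_pos
  have h := GaussianFourier.integral_rexp_neg_mul_sq_norm (V := EuclideanSpace ℝ (Fin d))
    (b := 1 / 2) (by norm_num)
  simp only [gK]
  rw [integral_const_mul]
  have e : ∀ z : EuclideanSpace ℝ (Fin d),
      -‖0 - z‖ ^ 2 / (2 * 1) = -(1 / 2) * ‖z‖ ^ 2 := by
    intro z
    rw [zero_sub, norm_neg]
    ring
  simp_rw [e]
  rw [h]
  have e2 : π / (1 / 2) = 2 * π * 1 := by ring
  rw [e2, ← Real.rpow_add (by positivity)]
  simp
  ring_nf
  simp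

open MeasureTheory in
lemma gK_limit (d : ℕ) (f : EuclideanSpace ℝ (Fin d) → ℝ)
    (hf : Continuous f) (hfs : HasCompactSupport f) (x : EuclideanSpace ℝ (Fin d)) :
    Tendsto (fun r : ℝ => ∫ z, gK d 1 0 z * f (x + r • z)) (𝓝 0) (𝓝 (f x)) := by
  have hint : Integrable (fun z => gK d 1 0 z) := by
    by_contra hcon
    have := integral_undef hcon
    rw [gK_integral] at this
    exact one_ne_zero this
  have hG : Continuous (fun y => gK d 1 0 y) :=
    (gK_cont d 1 one_pos).comp (f := fun y => (0, y)) (by fun_prop)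
  obtain ⟨C, hC⟩ := hfs.exists_bound_of_continuous hf
  have h := tendsto_integral_filter_of_dominated_convergence
    (μ := (volume : Measure (EuclideanSpace ℝ (Fin d)))) (l := 𝓝 (0:ℝ))
    (F := fun r z => gK d 1 0 z * f (x + r • z)) (f := fun z => gK d 1 0 z * f x)
    (fun z => ‖gK d 1 0 z‖ * C)
    (Eventually.of_forall fun r => Continuous.aestronglyMeasurable (by fun_prop))
    (Eventually.of_forall fun r => Eventually.of_forall fun z => by
      rw [norm_mul]
      exact mul_le_mul_of_nonneg_left (hC _) (norm_nonneg _))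
    (hint.norm.mul_const C)
    (Eventually.of_forall fun z => by
      have : Continuous (fun r : ℝ => gK d 1 0 z * f (x + r • z)) := by fun_prop
      simpa using this.tendsto 0)
  rwa [integral_mul_const, gK_integral, one_mul] at h

open MeasureTheory in
/-- Stochastic solution of the conformable fractional Cauchy problem for
fractional Brownian motion: with `u(t,x) = ∫ p(t,x,y) f(y) dy = E[f(x + Bᴴ(t))]`
for `t > 0` and `u(0,x) = f(x)`, we have `T_{2H} u = H Δₓ u` for `t > 0`, and
`u(t,x) → f(x)` as `t → 0⁺`. -/
theorem fbm_conformable_cauchy (d : ℕ) (hd : 1 ≤ d) (H : ℝ)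
    (hH : H ∈ Set.Ioo (0 : ℝ) (1 / 2))
    (f : EuclideanSpace ℝ (Fin d) → ℝ)
    (hf_cont : Continuous f) (hf_supp : HasCompactSupport f)
    (u : ℝ → EuclideanSpace ℝ (Fin d) → ℝ)
    (hu_pos : ∀ t : ℝ, 0 < t → ∀ x,
      u t x = ∫ y : EuclideanSpace ℝ (Fin d), fbmKernel d H t x y * f y)
    (hu_zero : ∀ x, u 0 x = f x) :
    (∀ t : ℝ, 0 < t → ∀ x : EuclideanSpace ℝ (Fin d),
        HasConformableDerivAt (2 * H) (fun s : ℝ => u s x)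
          (H * laplacian (fun z => u t z) x) t) ∧
      ∀ x : EuclideanSpace ℝ (Fin d),
        Tendsto (fun t : ℝ => u t x) (𝓝[>] (0 : ℝ)) (𝓝 (f x)) := by
  obtain ⟨hH0, hH1⟩ := hH
  have hu : ∀ t : ℝ, 0 < t → ∀ x, u t x = ∫ y, gK d (t ^ (2 * H)) x y * f y := hu_pos
  constructor
  · intro t ht x
    have hc : 0 < t ^ (2 * H) := Real.rpow_pos_of_pos ht _
    have e : (fun z => u t z) = fun z => ∫ y, gK d (t ^ (2 * H)) z y * f y := by
      ext z
      exact hu t ht z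
    rw [e, gK_laplacian d f hf_cont hf_supp _ hc x]
    set L := ∫ y, gK d (t ^ (2 * H)) x y *
      (‖x - y‖ ^ 2 / (t ^ (2 * H)) ^ 2 - d / (t ^ (2 * H))) * f y with hL
    have h1 : HasDerivAt (fun s : ℝ => u s x) (L / 2 * (2 * H * t ^ (2 * H - 1))) t := by
      have h2 := (gK_time d f hf_cont hf_supp _ hc x).comp t
        (Real.hasDerivAt_rpow_const (p := 2 * H) (Or.inl ht.ne'))
      refine h2.congr_of_eventuallyEq ?_
      filter_upwards [lt_mem_nhds ht] with s hs
      exact hu s hs x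
    have h3 : HasDerivAt (fun ε : ℝ => t + ε * t ^ (1 - 2 * H)) (t ^ (1 - 2 * H)) 0 := by
      simpa using ((hasDerivAt_id (0 : ℝ)).mul_const (t ^ (1 - 2 * H))).const_add t
    have h4 : HasDerivAt (fun ε : ℝ => u (t + ε * t ^ (1 - 2 * H)) x)
        (L / 2 * (2 * H * t ^ (2 * H - 1)) * t ^ (1 - 2 * H)) 0 := by
      refine HasDerivAt.comp (h₂ := fun s : ℝ => u s x) 0 ?_ h3
      simpa using h1
    have e2 : L / 2 * (2 * H * t ^ (2 * H - 1)) * t ^ (1 - 2 * H) = H * L := by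
      have : t ^ (2 * H - 1) * t ^ (1 - 2 * H) = 1 := by
        rw [← Real.rpow_add ht]
        simp
      linear_combination (H * L) * this
    rw [e2] at h4
    have h5 := h4.tendsto_slope_zero
    unfold HasConformableDerivAt
    refine h5.congr ?_
    intro ε
    simp [div_eq_inv_mul]
  · intro x
    have h1 : Tendsto (fun t : ℝ => t ^ H) (𝓝[>] 0) (𝓝 0) := by
      have := (Real.continuousAt_rpow_const 0 H (Or.inr hH0.le)).tendsto
      rw [Real.zero_rpow hH0.ne'] at this
      exact this.mono_left nhdsWithin_le_nhds
    refine ((gK_limit d f hf_cont hf_supp x).comp h1).congr' ?_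
    filter_upwards [self_mem_nhdsWithin] with t ht
    have ht : 0 < t := ht
    rw [hu t ht x, Function.comp_apply, ← gK_scale d f (t ^ H) (Real.rpow_pos_of_pos ht _) x,
      ← Real.rpow_natCast (t ^ H) 2, ← Real.rpow_mul ht.le]
    simp [mul_comm]
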